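/- arXiv:1201.6093 — 5 statements merged into one kernel-verified Lean document; each statement's English description precedes it below -/
import Mathlib

section
/- Let N be the lattice ⟨2⟩ ⊕ U(2) ⊕ E8(2) and N' the lattice ⟨4⟩ ⊕ U ⊕ E8, both of rank 11 and signature (2,9). Then there is a bijection between the orbit spaces D(N)/O(N) and D(N')/O(N') of the period domains modulo the full integral orthogonal groups. -/
open Matrix

/-- The hyperbolic plane `U`, with Gram matrix `[[0,1],[1,0]]`. -/
abbrev latU : Matrix (Fin 2) (Fin 2) ℤ := !![0, 1; 1, 0]

/-- The negative definite even unimodular lattice `E₈` (negative of the Cartan matrix). -/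
abbrev latE8 : Matrix (Fin 8) (Fin 8) ℤ :=
  !![-2,  0,  1,  0,  0,  0,  0,  0;
      0, -2,  0,  1,  0,  0,  0,  0;
      1,  0, -2,  1,  0,  0,  0,  0;
      0,  1,  1, -2,  1,  0,  0,  0;
      0,  0,  0,  1, -2,  1,  0,  0;
      0,  0,  0,  0,  1, -2,  1,  0;
      0,  0,  0,  0,  0,  1, -2,  1;
      0,  0,  0,  0,  0,  0,  1, -2]

/-- Orthogonal direct sum of two lattices (block-diagonal Gram matrix). -/
def dsum {a b : ℕ} (A : Matrix (Fin a) (Fin a) ℤ) (B : Matrix (Fin b) (Fin b) ℤ) :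
    Matrix (Fin (a + b)) (Fin (a + b)) ℤ :=
  Matrix.reindex finSumFinEquiv finSumFinEquiv (Matrix.fromBlocks A 0 0 B)

/-- `N = ⟨2⟩ ⊕ U(2) ⊕ E8(2)`. -/
def gramN : Matrix (Fin 11) (Fin 11) ℤ := dsum (dsum !![(2 : ℤ)] (2 • latU)) (2 • latE8)

/-- `N' = ⟨4⟩ ⊕ U ⊕ E8`. -/
def gramN' : Matrix (Fin 11) (Fin 11) ℤ := dsum (dsum !![(4 : ℤ)] latU) latE8

/-- The complex bilinear form attached to an integral Gram matrix `G`. -/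
noncomputable def cform {n : ℕ} (G : Matrix (Fin n) (Fin n) ℤ) (x y : Fin n → ℂ) : ℂ :=
  x ⬝ᵥ (G.map (Int.cast : ℤ → ℂ)).mulVec y

/-- `ω` represents a point of the period domain `D(N)`:
`ω ≠ 0`, `ωᵀGω = 0` and `ωᵀGω̄` is a positive real number. -/
def IsPeriodPt {n : ℕ} (G : Matrix (Fin n) (Fin n) ℤ) (ω : Fin n → ℂ) : Prop :=
  ω ≠ 0 ∧ cform G ω ω = 0 ∧ ∃ r : ℝ, 0 < r ∧ cform G ω (star ω) = (r : ℂ)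

/-- Two period points are related iff they define the same point of the projectivization
up to the action of an integral isometry `P ∈ O(G)`. -/
def periodRel {n : ℕ} (G : Matrix (Fin n) (Fin n) ℤ)
    (ω₁ ω₂ : {ω : Fin n → ℂ // IsPeriodPt G ω}) : Prop :=
  ∃ (c : ℂ) (P : Matrix (Fin n) (Fin n) ℤ), c ≠ 0 ∧ IsUnit P.det ∧ Pᵀ * G * P = G ∧
    (ω₂ : Fin n → ℂ) = c • (P.map (Int.cast : ℤ → ℂ)).mulVec (ω₁ : Fin n → ℂ)

/-- The orbit space `D(N)/O(N)` of the period domain modulo the integral orthogonal group. -/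
def OrbitSpace {n : ℕ} (G : Matrix (Fin n) (Fin n) ℤ) : Type :=
  Quot (periodRel G)

/-!
The orthogonal group and the period domain are unchanged when the form is multiplied by a positive
integer, and passing to a finite index sublattice `L' ⊆ L` changes neither as long as `O(L)`
preserves `L'` and every isometry of `L'` extends to `L`. For `L = A ⊕ M(2)` take `L' = 2A ⊕ M(2)`,
which is isometric to `(A(2) ⊕ M)(2)`. With respect to these decompositions, an isometry of `L`
preserves `L'` iff its block `M → A` is divisible by two, and an isometry of `L'` extends to `L`
iff its block `A → M` is divisible by two. The first holds because `M` is even and every vector of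
`A` whose norm is divisible by four lies in `2A`; the second because `M` has odd determinant.
-/

section Isometries

variable {ι κ : Type*} [Fintype ι] [Fintype κ]

theorem reindex_mul {R : Type*} [NonUnitalNonAssocSemiring R] (e : ι ≃ κ) (A B : Matrix ι ι R) :
    reindex e e (A * B) = reindex e e A * reindex e e B := by
  simp only [reindex_apply, submatrix_mul_equiv]

variable [DecidableEq ι] [DecidableEq κ]

/-- `P` is an element of the orthogonal group `O(L)` of the lattice `L` with Gram matrix `G`. -/
def IsLatticeIsometry (G P : Matrix ι ι ℤ) : Prop :=
  IsUnit P.det ∧ Pᵀ * G * P = G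

theorem isLatticeIsometry_smul_iff {G P : Matrix ι ι ℤ} {m : ℤ} (hm : m ≠ 0) :
    IsLatticeIsometry (m • G) P ↔ IsLatticeIsometry G P := by
  simp only [IsLatticeIsometry, Matrix.mul_smul, Matrix.smul_mul, smul_right_inj hm]

theorem isLatticeIsometry_reindex_iff {G P : Matrix ι ι ℤ} (e : ι ≃ κ) :
    IsLatticeIsometry (reindex e e G) (reindex e e P) ↔ IsLatticeIsometry G P := by
  rw [IsLatticeIsometry, IsLatticeIsometry, det_reindex_self, transpose_reindex,
    ← reindex_mul, ← reindex_mul, (reindex e e).apply_eq_iff_eq]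

theorem isLatticeIsometry_iff_of_mul_eq_mul {G T P Q : Matrix ι ι ℤ} (hT : T.det ≠ 0)
    (h : Q * T = T * P) : IsLatticeIsometry G Q ↔ IsLatticeIsometry (Tᵀ * G * T) P := by
  have hdet : Q.det = P.det := by
    have := congrArg det h
    rw [det_mul, det_mul, mul_comm] at this
    exact mul_left_cancel₀ hT this
  have hgram : Pᵀ * (Tᵀ * G * T) * P = Tᵀ * (Qᵀ * G * Q) * T := by
    calc Pᵀ * (Tᵀ * G * T) * P = (T * P)ᵀ * G * (T * P) := by
          simp only [transpose_mul, Matrix.mul_assoc]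
      _ = Tᵀ * (Qᵀ * G * Q) * T := by
          simp only [← h, transpose_mul, Matrix.mul_assoc]
  have hTreg : IsRegular T := isRegular_of_isLeftRegular_det (IsRegular.of_ne_zero hT).left
  have hTtreg : IsRegular Tᵀ :=
    isRegular_of_isLeftRegular_det (by rw [det_transpose]; exact (IsRegular.of_ne_zero hT).left)
  rw [IsLatticeIsometry, IsLatticeIsometry, hdet, hgram, hTreg.right.eq_iff, hTtreg.left.eq_iff]

/-- For the lattice `L` with Gram matrix `G` and its sublattice `L'` spanned by the columns of `T`,
the condition `O(L) = O(L')` inside the isometry group of `L ⊗ ℚ`. Matrices `Q` and `P` with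
`Q * T = T * P` represent the same map in the bases of `L` and `L'`. -/
structure SameIsometries (G T : Matrix ι ι ℤ) : Prop where
  restrict : ∀ Q, IsLatticeIsometry G Q → ∃ P, Q * T = T * P
  extend : ∀ P, IsLatticeIsometry (Tᵀ * G * T) P → ∃ Q, Q * T = T * P

theorem SameIsometries.reindex {G T : Matrix ι ι ℤ} (h : SameIsometries G T) (e : ι ≃ κ) :
    SameIsometries (reindex e e G) (reindex e e T) where
  restrict Q hQ := by
    obtain ⟨Q, rfl⟩ := (Matrix.reindex e e).surjective Q
    obtain ⟨P, hP⟩ := h.restrict Q ((isLatticeIsometry_reindex_iff e).1 hQ)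
    exact ⟨Matrix.reindex e e P, by rw [← reindex_mul, hP, reindex_mul]⟩
  extend P hP := by
    obtain ⟨P, rfl⟩ := (Matrix.reindex e e).surjective P
    rw [transpose_reindex, ← reindex_mul, ← reindex_mul] at hP
    obtain ⟨Q, hQ⟩ := h.extend P ((isLatticeIsometry_reindex_iff e).1 hP)
    exact ⟨Matrix.reindex e e Q, by rw [← reindex_mul, hQ, reindex_mul]⟩

end Isometries

section PeriodDomain

variable {n : ℕ} {G T : Matrix (Fin n) (Fin n) ℤ}

theorem cform_smul (m : ℤ) (G : Matrix (Fin n) (Fin n) ℤ) (x y : Fin n → ℂ) :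
    cform (m • G) x y = m * cform G x y := by
  have hmap : (m • G).map (Int.cast : ℤ → ℂ) = (m : ℂ) • G.map (Int.cast : ℤ → ℂ) := by
    ext i j
    simp [-zsmul_eq_mul]
  rw [cform, cform, hmap, smul_mulVec, dotProduct_smul, smul_eq_mul]

theorem cform_mulVec_mulVec (G T : Matrix (Fin n) (Fin n) ℤ) (x y : Fin n → ℂ) :
    cform G (T.map (Int.cast : ℤ → ℂ) *ᵥ x) (T.map (Int.cast : ℤ → ℂ) *ᵥ y) =
      cform (Tᵀ * G * T) x y := by
  rw [cform, cform, map_mul_intCast, map_mul_intCast, transpose_map, ← vecMul_transpose,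
    ← dotProduct_mulVec, mulVec_mulVec, mulVec_mulVec, Matrix.mul_assoc]

theorem star_map_intCast_mulVec (T : Matrix (Fin n) (Fin n) ℤ) (x : Fin n → ℂ) :
    star (T.map (Int.cast : ℤ → ℂ) *ᵥ x) = T.map (Int.cast : ℤ → ℂ) *ᵥ star x := by
  have hT : (T.map (Int.cast : ℤ → ℂ))ᴴ = (T.map (Int.cast : ℤ → ℂ))ᵀ := by
    ext i j
    simp
  rw [star_mulVec, hT, vecMul_transpose]

theorem isPeriodPt_smul_iff {m : ℤ} (hm : 0 < m) {ω : Fin n → ℂ} :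
    IsPeriodPt (m • G) ω ↔ IsPeriodPt G ω := by
  have hmC : (m : ℂ) ≠ 0 := mod_cast hm.ne'
  have hmR : (0 : ℝ) < m := mod_cast hm
  simp only [IsPeriodPt, cform_smul, mul_eq_zero, hmC, false_or]
  refine and_congr_right fun _ => and_congr_right fun _ => ⟨?_, ?_⟩
  · rintro ⟨r, hr, h⟩
    refine ⟨r / m, div_pos hr hmR, ?_⟩
    rw [Complex.ofReal_div, Complex.ofReal_intCast, ← h, mul_div_cancel_left₀ _ hmC]
  · rintro ⟨r, hr, h⟩
    refine ⟨m * r, mul_pos hmR hr, ?_⟩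
    rw [h, Complex.ofReal_mul, Complex.ofReal_intCast]

theorem periodRel_iff {ω₁ ω₂ : {ω : Fin n → ℂ // IsPeriodPt G ω}} :
    periodRel G ω₁ ω₂ ↔ ∃ c : ℂ, c ≠ 0 ∧ ∃ P, IsLatticeIsometry G P ∧
      (ω₂ : Fin n → ℂ) = c • P.map (Int.cast : ℤ → ℂ) *ᵥ (ω₁ : Fin n → ℂ) := by
  simp only [periodRel, IsLatticeIsometry, exists_and_left, and_assoc]

/-- The identification `D(L(m))/O(L(m)) ≃ D(L)/O(L)` for `m > 0`, given by the identity on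
coordinate vectors. -/
def OrbitSpace.smulEquiv {m : ℤ} (hm : 0 < m) : OrbitSpace (m • G) ≃ OrbitSpace G :=
  Quot.congr (Equiv.subtypeEquivRight fun _ => isPeriodPt_smul_iff hm) fun _ _ => by
    simp only [periodRel_iff, isLatticeIsometry_smul_iff hm.ne', Equiv.subtypeEquivRight_apply_coe]

/-- The change of coordinates `L' ⊗ ℂ ≃ L ⊗ ℂ` for the finite index sublattice `L'` of `L` spanned
by the columns of `T`. -/
noncomputable def complexification (hT : T.det ≠ 0) : (Fin n → ℂ) ≃ (Fin n → ℂ) :=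
  have hunit : IsUnit (T.map (Int.cast : ℤ → ℂ)) := by
    rw [isUnit_iff_isUnit_det, ← Int.cast_det]
    exact (Int.cast_ne_zero.2 hT).isUnit
  Equiv.ofBijective (T.map (Int.cast : ℤ → ℂ)).mulVec
    ⟨mulVec_injective_iff_isUnit.2 hunit, mulVec_surjective_iff_isUnit.2 hunit⟩

theorem complexification_apply (hT : T.det ≠ 0) (x : Fin n → ℂ) :
    complexification hT x = T.map (Int.cast : ℤ → ℂ) *ᵥ x :=
  rfl

theorem isPeriodPt_complexification_iff (hT : T.det ≠ 0) (ω : Fin n → ℂ) :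
    IsPeriodPt (Tᵀ * G * T) ω ↔ IsPeriodPt G (complexification hT ω) := by
  have hzero : complexification hT ω = 0 ↔ ω = 0 := by
    rw [← (complexification hT).apply_eq_iff_eq (x := ω), complexification_apply hT 0, mulVec_zero]
  simp only [IsPeriodPt, ne_eq, hzero]
  simp only [complexification_apply, star_map_intCast_mulVec, cform_mulVec_mulVec]

theorem complexification_smul_mulVec (hT : T.det ≠ 0) {P Q : Matrix (Fin n) (Fin n) ℤ}
    (h : Q * T = T * P) (c : ℂ) (x : Fin n → ℂ) :
    complexification hT (c • P.map (Int.cast : ℤ → ℂ) *ᵥ x) =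
      c • Q.map (Int.cast : ℤ → ℂ) *ᵥ complexification hT x := by
  simp only [complexification_apply, mulVec_smul, mulVec_mulVec, ← map_mul_intCast, h]

theorem periodRel_complexification_iff (hT : T.det ≠ 0) (h : SameIsometries G T)
    (ω₁ ω₂ : {ω : Fin n → ℂ // IsPeriodPt (Tᵀ * G * T) ω}) :
    periodRel (Tᵀ * G * T) ω₁ ω₂ ↔
      periodRel G
        ((complexification hT).subtypeEquiv (isPeriodPt_complexification_iff hT) ω₁)
        ((complexification hT).subtypeEquiv (isPeriodPt_complexification_iff hT) ω₂) := by
  simp only [periodRel_iff, Equiv.subtypeEquiv_apply]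
  refine exists_congr fun c => and_congr_right fun _ => ⟨?_, ?_⟩
  · rintro ⟨P, hP, hω⟩
    obtain ⟨Q, hQP⟩ := h.extend P hP
    refine ⟨Q, (isLatticeIsometry_iff_of_mul_eq_mul hT hQP).2 hP, ?_⟩
    rw [← complexification_smul_mulVec hT hQP, hω]
  · rintro ⟨Q, hQ, hω⟩
    obtain ⟨P, hQP⟩ := h.restrict Q hQ
    refine ⟨P, (isLatticeIsometry_iff_of_mul_eq_mul hT hQP).1 hQ, ?_⟩
    rwa [← complexification_smul_mulVec hT hQP, EmbeddingLike.apply_eq_iff_eq] at hω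

/-- The identification `D(L')/O(L') ≃ D(L)/O(L)` for the finite index sublattice `L'` of `L` spanned
by the columns of `T`, when `L` and `L'` have the same isometries. -/
noncomputable def OrbitSpace.sublatticeEquiv (hT : T.det ≠ 0) (h : SameIsometries G T) :
    OrbitSpace (Tᵀ * G * T) ≃ OrbitSpace G :=
  Quot.congr ((complexification hT).subtypeEquiv (isPeriodPt_complexification_iff hT))
    (periodRel_complexification_iff hT h)

end PeriodDomain

section Blocks

variable {ι κ : Type*}

theorem exists_eq_smul_of_forall_dvd {R : Type*} [Semigroup R] {d : R} {X : Matrix ι κ R}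
    (h : ∀ i j, d ∣ X i j) : ∃ Y : Matrix ι κ R, X = d • Y := by
  choose Y hY using h
  exact ⟨of Y, ext hY⟩

variable [Fintype ι]

theorem transpose_mul_mul_apply {R : Type*} [NonUnitalSemiring R] (A : Matrix ι ι R)
    (X : Matrix ι κ R) (i j : κ) : (Xᵀ * A * X) i j = X.col i ⬝ᵥ A *ᵥ X.col j := by
  rw [Matrix.mul_assoc]
  rfl

variable [Fintype κ]

theorem even_dotProduct_mulVec {M : Matrix κ κ ℤ} (hsymm : M.IsSymm) (heven : ∀ i, Even (M i i))
    (v : κ → ℤ) : Even (v ⬝ᵥ M *ᵥ v) := by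
  have hsum : v ⬝ᵥ M *ᵥ v = ∑ p : κ × κ, v p.1 * M p.1 p.2 * v p.2 := by
    simp only [dotProduct, mulVec, Finset.mul_sum, mul_assoc, Fintype.sum_prod_type]
  rw [← ZMod.intCast_eq_zero_iff_even, hsum, Int.cast_sum]
  refine Finset.sum_involution (fun p _ => p.swap) (fun p _ => ?_) (fun p _ hp heq => hp ?_)
    (fun _ _ => Finset.mem_univ _) (fun _ _ => Prod.swap_swap _)
  · rw [Prod.fst_swap, Prod.snd_swap, ← hsymm.apply p.1 p.2, ← Int.cast_add,
      ZMod.intCast_eq_zero_iff_even]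
    exact ⟨v p.1 * M p.2 p.1 * v p.2, by ring⟩
  · have hdiag : p.2 = p.1 := congrArg Prod.fst heq
    rw [ZMod.intCast_eq_zero_iff_even, hdiag]
    exact ((heven p.1).mul_left _).mul_right _

variable [DecidableEq ι] [DecidableEq κ]

section CommRing

variable {R : Type*} [CommRing R]

theorem transpose_mul_fromBlocks_mul (d : R) (A : Matrix ι ι R) (M : Matrix κ κ R) :
    (fromBlocks (d • 1) 0 0 1)ᵀ * fromBlocks A 0 0 (d • M) * fromBlocks (d • 1) 0 0 1 =
      d • fromBlocks (d • A) 0 0 M := by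
  simp [fromBlocks_transpose, fromBlocks_multiply, fromBlocks_smul]

theorem exists_mul_fromBlocks_eq_of_dvd_toBlocks₁₂ {d : R} {Q : Matrix (ι ⊕ κ) (ι ⊕ κ) R}
    (hQ : ∀ i j, d ∣ Q.toBlocks₁₂ i j) :
    ∃ P, Q * fromBlocks (d • 1) 0 0 1 = fromBlocks (d • 1) 0 0 1 * P := by
  obtain ⟨Y, hY⟩ := exists_eq_smul_of_forall_dvd hQ
  refine ⟨fromBlocks Q.toBlocks₁₁ Y (d • Q.toBlocks₂₁) Q.toBlocks₂₂, ?_⟩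
  conv_lhs => rw [← fromBlocks_toBlocks Q, hY]
  simp [fromBlocks_multiply]

theorem exists_mul_fromBlocks_eq_of_dvd_toBlocks₂₁ {d : R} {P : Matrix (ι ⊕ κ) (ι ⊕ κ) R}
    (hP : ∀ i j, d ∣ P.toBlocks₂₁ i j) :
    ∃ Q, Q * fromBlocks (d • 1) 0 0 1 = fromBlocks (d • 1) 0 0 1 * P := by
  obtain ⟨Y, hY⟩ := exists_eq_smul_of_forall_dvd hP
  refine ⟨fromBlocks P.toBlocks₁₁ (d • P.toBlocks₁₂) Y P.toBlocks₂₂, ?_⟩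
  conv_rhs => rw [← fromBlocks_toBlocks P, hY]
  simp [fromBlocks_multiply]

end CommRing

theorem IsLatticeIsometry.dvd_toBlocks₂₁ {d : ℤ} {A : Matrix ι ι ℤ} {M : Matrix κ κ ℤ}
    {P : Matrix (ι ⊕ κ) (ι ⊕ κ) ℤ} (hP : IsLatticeIsometry (fromBlocks (d • A) 0 0 M) P)
    (hdet : IsCoprime d M.det) (i : κ) (j : ι) : d ∣ P.toBlocks₂₁ i j := by
  obtain ⟨hunit, hgram⟩ := hP
  have hinv : fromBlocks (d • A) 0 0 M * P = P⁻¹ᵀ * fromBlocks (d • A) 0 0 M := by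
    nth_rw 2 [← hgram]
    rw [Matrix.mul_assoc, ← Matrix.mul_assoc, ← transpose_mul, mul_nonsing_inv _ hunit,
      transpose_one, Matrix.one_mul]
  have hblock : M * P.toBlocks₂₁ = d • (P⁻¹ᵀ.toBlocks₂₁ * A) := by
    generalize P⁻¹ᵀ = W at hinv ⊢
    rw [← fromBlocks_toBlocks P, ← fromBlocks_toBlocks W] at hinv
    simpa [fromBlocks_multiply, -zsmul_eq_mul] using congrArg toBlocks₂₁ hinv
  have hadj : M.det • P.toBlocks₂₁ = d • (M.adjugate * (P⁻¹ᵀ.toBlocks₂₁ * A)) := by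
    rw [← Matrix.mul_smul, ← hblock, ← Matrix.mul_assoc, adjugate_mul, Matrix.smul_mul,
      Matrix.one_mul]
  exact hdet.dvd_of_dvd_mul_left ⟨_, congrFun₂ hadj i j⟩

theorem IsLatticeIsometry.two_dvd_toBlocks₁₂ {A : Matrix ι ι ℤ} {M : Matrix κ κ ℤ}
    {Q : Matrix (ι ⊕ κ) (ι ⊕ κ) ℤ} (hQ : IsLatticeIsometry (fromBlocks A 0 0 ((2 : ℤ) • M)) Q)
    (hA : ∀ x, 4 ∣ x ⬝ᵥ A *ᵥ x → ∀ i, 2 ∣ x i) (hsymm : M.IsSymm) (heven : ∀ i, Even (M i i))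
    (i : ι) (j : κ) : 2 ∣ Q.toBlocks₁₂ i j := by
  have hblock : Q.toBlocks₁₂ᵀ * A * Q.toBlocks₁₂ +
      (2 : ℤ) • (Q.toBlocks₂₂ᵀ * M * Q.toBlocks₂₂) = (2 : ℤ) • M := by
    have hgram := hQ.2
    rw [← fromBlocks_toBlocks Q] at hgram
    simpa [fromBlocks_transpose, fromBlocks_multiply, -zsmul_eq_mul] using
      congrArg toBlocks₂₂ hgram
  have hnorm : Q.toBlocks₁₂.col j ⬝ᵥ A *ᵥ Q.toBlocks₁₂.col j +
      2 * (Q.toBlocks₂₂.col j ⬝ᵥ M *ᵥ Q.toBlocks₂₂.col j) = 2 * M j j := by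
    have := congrFun₂ hblock j j
    rwa [Matrix.add_apply, Matrix.smul_apply, Matrix.smul_apply, transpose_mul_mul_apply,
      transpose_mul_mul_apply] at this
  obtain ⟨k, hk⟩ := even_dotProduct_mulVec hsymm heven (Q.toBlocks₂₂.col j)
  obtain ⟨l, hl⟩ := heven j
  exact hA _ ⟨l - k, by linarith⟩ i

theorem sameIsometries_fromBlocks {A : Matrix ι ι ℤ} {M : Matrix κ κ ℤ}
    (hA : ∀ x, 4 ∣ x ⬝ᵥ A *ᵥ x → ∀ i, 2 ∣ x i) (hsymm : M.IsSymm) (heven : ∀ i, Even (M i i))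
    (hdet : Odd M.det) :
    SameIsometries (fromBlocks A 0 0 ((2 : ℤ) • M)) (fromBlocks ((2 : ℤ) • 1) 0 0 1) where
  restrict _ hQ :=
    exists_mul_fromBlocks_eq_of_dvd_toBlocks₁₂ (hQ.two_dvd_toBlocks₁₂ hA hsymm heven)
  extend _ hP := by
    rw [transpose_mul_fromBlocks_mul, isLatticeIsometry_smul_iff two_ne_zero] at hP
    have hcoprime : IsCoprime 2 M.det := Int.isCoprime_two_left.2 hdet
    exact exists_mul_fromBlocks_eq_of_dvd_toBlocks₂₁ (hP.dvd_toBlocks₂₁ hcoprime)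

end Blocks

theorem det_dsum {a b : ℕ} (A : Matrix (Fin a) (Fin a) ℤ) (B : Matrix (Fin b) (Fin b) ℤ) :
    (dsum A B).det = A.det * B.det := by
  rw [dsum, det_reindex_self, det_fromBlocks_zero₂₁]

theorem transpose_mul_dsum_mul {a b : ℕ} (d : ℤ) (A : Matrix (Fin a) (Fin a) ℤ)
    (M : Matrix (Fin b) (Fin b) ℤ) :
    (dsum (d • 1) 1)ᵀ * dsum A (d • M) * dsum (d • 1) 1 = d • dsum (d • A) M := by
  simp only [dsum, transpose_reindex, ← reindex_mul, transpose_mul_fromBlocks_mul]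
  rfl

theorem sameIsometries_dsum {a b : ℕ} {A : Matrix (Fin a) (Fin a) ℤ}
    {M : Matrix (Fin b) (Fin b) ℤ} (hA : ∀ x, 4 ∣ x ⬝ᵥ A *ᵥ x → ∀ i, 2 ∣ x i)
    (hsymm : M.IsSymm) (heven : ∀ i, Even (M i i)) (hdet : Odd M.det) :
    SameIsometries (dsum A ((2 : ℤ) • M)) (dsum ((2 : ℤ) • 1) 1) :=
  (sameIsometries_fromBlocks hA hsymm heven hdet).reindex finSumFinEquiv

theorem coble_orbitSpace_equiv_general {a b : ℕ} {A : Matrix (Fin a) (Fin a) ℤ}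
    {M : Matrix (Fin b) (Fin b) ℤ} (hA : ∀ x, 4 ∣ x ⬝ᵥ A *ᵥ x → ∀ i, 2 ∣ x i)
    (hsymm : M.IsSymm) (heven : ∀ i, Even (M i i)) (hdet : Odd M.det) :
    Nonempty (OrbitSpace (dsum A ((2 : ℤ) • M)) ≃ OrbitSpace (dsum ((2 : ℤ) • A) M)) := by
  have hdetT : (dsum ((2 : ℤ) • (1 : Matrix (Fin a) (Fin a) ℤ))
      (1 : Matrix (Fin b) (Fin b) ℤ)).det ≠ 0 := by
    rw [det_dsum, det_smul, det_one, det_one]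
    simp
  have e := OrbitSpace.sublatticeEquiv hdetT (sameIsometries_dsum hA hsymm heven hdet)
  rw [transpose_mul_dsum_mul] at e
  exact ⟨e.symm.trans (OrbitSpace.smulEquiv two_pos)⟩

theorem latE8_eq_neg_cartanMatrix : latE8 = -CartanMatrix.E₈ := by
  decide

theorem isSymm_dsum_latU_latE8 : (dsum latU latE8).IsSymm := by
  rw [IsSymm]
  decide

theorem even_dsum_latU_latE8_diag (i : Fin (2 + 8)) : Even (dsum latU latE8 i i) := by
  revert i
  decide

theorem det_dsum_latU_latE8 : (dsum latU latE8).det = -1 := by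
  rw [det_dsum, latE8_eq_neg_cartanMatrix, det_neg, CartanMatrix.E₈_det]
  simp

theorem two_dvd_of_four_dvd_dotProduct_mulVec {a : ℤ} (ha : ¬4 ∣ a) (x : Fin 1 → ℤ)
    (hx : 4 ∣ x ⬝ᵥ !![a] *ᵥ x) (i : Fin 1) : 2 ∣ x i := by
  rw [Subsingleton.elim i 0]
  by_contra hodd
  have hcoprime : IsCoprime 4 (x 0) := by
    rw [← even_iff_two_dvd, Int.not_even_iff_odd, ← Int.isCoprime_two_left] at hodd
    exact hodd.pow_left (m := 2)
  have hmul : 4 ∣ x 0 * (a * x 0) := by simpa [dotProduct, mulVec] using hx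
  exact ha (hcoprime.dvd_of_dvd_mul_right (hcoprime.dvd_of_dvd_mul_left hmul))

-- `decide` regroups the summands here: `Fin ((1 + 2) + 8)` and `Fin (1 + (2 + 8))` both reduce to
-- `Fin 11`.
theorem gramN_eq : gramN = dsum !![2] ((2 : ℤ) • dsum latU latE8) := by
  decide +kernel

theorem gramN'_eq : gramN' = dsum ((2 : ℤ) • !![2]) (dsum latU latE8) := by
  decide +kernel

/-- There is a bijection between `D(N)/O(N)` and `D(N')/O(N')` for
`N = ⟨2⟩ ⊕ U(2) ⊕ E8(2)` and `N' = ⟨4⟩ ⊕ U ⊕ E8`. -/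
theorem coble_orbitSpace_equiv : Nonempty (OrbitSpace gramN ≃ OrbitSpace gramN') := by
  rw [gramN_eq, gramN'_eq]
  exact coble_orbitSpace_equiv_general (two_dvd_of_four_dvd_dotProduct_mulVec (by decide))
    isSymm_dsum_latU_latE8 even_dsum_latU_latE8_diag (by rw [det_dsum_latU_latE8]; decide)
end

section
/- Let T be the odd unimodular lattice ⟨1⟩ ⊕ U ⊕ E8 of rank 11. The set T₀ of vectors of T of even norm is a sublattice of index 2 in T, it is isometric to the lattice ⟨4⟩ ⊕ U ⊕ E8, and it is the unique index-2 sublattice of T on which the form is even (i.e., every subgroup of index 2 all of whose elements have even norm equals T₀). -/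
open Matrix

/-- The bilinear form of the lattice with Gram matrix `G` : `x ⋅ y = xᵀ G y`. -/
def bform {n : ℕ} (G : Matrix (Fin n) (Fin n) ℤ) (x y : Fin n → ℤ) : ℤ :=
  x ⬝ᵥ G.mulVec y

/-- `T = ⟨1⟩ ⊕ U ⊕ E8`, an odd unimodular lattice of rank 11. -/
def gramT : Matrix (Fin 11) (Fin 11) ℤ := dsum (dsum !![(1 : ℤ)] latU) latE8

/-- `⟨4⟩ ⊕ U ⊕ E8`. -/
def gramT0 : Matrix (Fin 11) (Fin 11) ℤ := dsum (dsum !![(4 : ℤ)] latU) latE8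

/-! In a symmetric lattice `x ↦ x ⋅ x mod 2` is additive, since the cross terms `2 (x ⋅ y)` vanish.
If the lattice is odd, this functional is onto `ℤ/2`, so its kernel, the even sublattice, has
index 2, and it contains every subgroup on which the norm is even. If exactly one diagonal
entry `G k k` is odd, the functional is `x ↦ x k mod 2`, so the even sublattice is the image of the
map doubling the `k`-th coordinate. -/

section Bform

variable {n : ℕ} {G : Matrix (Fin n) (Fin n) ℤ}

lemma bform_comm (hG : G.IsSymm) (x y : Fin n → ℤ) : bform G x y = bform G y x := by
  simpa only [bform, hG.eq] using dotProduct_transpose_mulVec G x y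

lemma bform_add_add (hG : G.IsSymm) (x y : Fin n → ℤ) :
    bform G (x + y) (x + y) = bform G x x + 2 * bform G x y + bform G y y := by
  have expand : bform G (x + y) (x + y) =
      bform G x x + bform G y x + (bform G x y + bform G y y) := by
    simp only [bform, mulVec_add, add_dotProduct, dotProduct_add]
  rw [expand, bform_comm hG y x]
  ring

lemma bform_single_one (G : Matrix (Fin n) (Fin n) ℤ) (i : Fin n) :
    bform G (Pi.single i 1) (Pi.single i 1) = G i i := by
  simp [bform]

lemma bform_transpose_mul_mul (G P : Matrix (Fin n) (Fin n) ℤ) (x y : Fin n → ℤ) :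
    bform (Pᵀ * G * P) x y = bform G (P *ᵥ x) (P *ᵥ y) := by
  simp only [bform, ← mulVec_mulVec, dotProduct_mulVec x, vecMul_transpose]

/-- The norm modulo 2 of a lattice, as a linear functional; its kernel is the even sublattice. -/
def normParity (hG : G.IsSymm) : (Fin n → ℤ) →ₗ[ℤ] ZMod 2 :=
  (AddMonoidHom.mk' (fun x => (bform G x x : ZMod 2)) fun x y => by
    have two_eq_zero : (2 : ZMod 2) = 0 := rfl
    simp only [bform_add_add hG, Int.cast_add, Int.cast_mul, Int.cast_ofNat, two_eq_zero,
      zero_mul, add_zero]).toIntLinearMap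

lemma normParity_apply (hG : G.IsSymm) (x : Fin n → ℤ) :
    normParity hG x = (bform G x x : ZMod 2) :=
  rfl

/-- The even sublattice: the vectors of even norm in a symmetric lattice. -/
def evenSublattice (hG : G.IsSymm) : Submodule ℤ (Fin n → ℤ) :=
  LinearMap.ker (normParity hG)

lemma mem_evenSublattice (hG : G.IsSymm) {x : Fin n → ℤ} :
    x ∈ evenSublattice hG ↔ Even (bform G x x) :=
  ZMod.intCast_eq_zero_iff_even

lemma index_evenSublattice (hG : G.IsSymm) {v : Fin n → ℤ} (hv : Odd (bform G v v)) :
    (evenSublattice hG).toAddSubgroup.index = 2 := by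
  refine AddSubgroup.index_eq_two_iff.2 ⟨v, fun x => ?_⟩
  have add_mem_iff : x + v ∈ evenSublattice hG ↔ x ∉ evenSublattice hG := by
    simp only [mem_evenSublattice, bform_add_add hG]
    grind
  exact (xor_iff_not_iff _ _).2 fun h => iff_not_self (h.symm.trans add_mem_iff)

lemma eq_evenSublattice_of_index_eq_two (hG : G.IsSymm) {v : Fin n → ℤ}
    (hv : Odd (bform G v v)) {H : AddSubgroup (Fin n → ℤ)} (hH : H.index = 2)
    (heven : ∀ x ∈ H, Even (bform G x x)) :
    H = (evenSublattice hG).toAddSubgroup := by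
  have hle : H ≤ (evenSublattice hG).toAddSubgroup :=
    fun x hx => (mem_evenSublattice hG).2 (heven x hx)
  have : H.FiniteIndex := ⟨by simp [hH]⟩
  refine hle.eq_of_not_lt fun hlt => (AddSubgroup.index_strictAnti hlt).ne ?_
  rw [index_evenSublattice hG hv, hH]

lemma normParity_eq_sum_diag (hG : G.IsSymm) (x : Fin n → ℤ) :
    normParity hG x = ∑ i, x i • (G i i : ZMod 2) := by
  have hsingle (i : Fin n) : normParity hG (Pi.single i 1) = G i i := by
    rw [normParity_apply, bform_single_one]
  simp only [← hsingle, ← map_zsmul, ← map_sum, ← pi_eq_sum_univ']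

lemma mem_evenSublattice_iff_even_apply (hG : G.IsSymm) {k : Fin n}
    (hk : ∀ i, Odd (G i i) ↔ i = k) {x : Fin n → ℤ} :
    x ∈ evenSublattice hG ↔ Even (x k) := by
  have hdiag (i : Fin n) : (G i i : ZMod 2) = if i = k then 1 else 0 := by
    split_ifs with hi
    · exact ((hk i).2 hi).intCast_zmod_two
    · exact (Int.not_odd_iff_even.1 (mt (hk i).1 hi)).intCast_zmod_two
  have hparity : normParity hG x = (x k : ZMod 2) := by
    simp [normParity_eq_sum_diag, hdiag]
  rw [evenSublattice, LinearMap.mem_ker, hparity, ZMod.intCast_eq_zero_iff_even]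

theorem exists_isometry_range_mulVecLin (G : Matrix (Fin n) (Fin n) ℤ)
    {P : Matrix (Fin n) (Fin n) ℤ} (hP : P.det ≠ 0) :
    ∃ e : LinearMap.range P.mulVecLin ≃ₗ[ℤ] (Fin n → ℤ),
      ∀ x y, bform (Pᵀ * G * P) (e x) (e y) = bform G x y := by
  let f := LinearEquiv.ofInjective P.mulVecLin (mulVec_injective_of_det_ne_zero hP)
  have mulVec_symm (x) : P *ᵥ f.symm x = x := congrArg Subtype.val (f.apply_symm_apply x)
  exact ⟨f.symm, fun x y => by rw [bform_transpose_mul_mul, mulVec_symm, mulVec_symm]⟩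

/-- The diagonal matrix of the linear map that doubles the `k`-th coordinate. -/
def doubleCoord (k : Fin n) : Matrix (Fin n) (Fin n) ℤ :=
  diagonal (Pi.mulSingle k 2)

lemma det_doubleCoord (k : Fin n) : (doubleCoord k).det = 2 := by
  rw [doubleCoord, det_diagonal, Finset.prod_pi_mulSingle', if_pos (Finset.mem_univ k)]

lemma mem_range_doubleCoord {k : Fin n} {x : Fin n → ℤ} :
    x ∈ LinearMap.range (doubleCoord k).mulVecLin ↔ Even (x k) := by
  constructor
  · rintro ⟨y, rfl⟩
    simp [doubleCoord, mulVec_diagonal]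
  · rintro ⟨m, hm⟩
    refine ⟨Function.update x k m, funext fun i => ?_⟩
    obtain rfl | hi := eq_or_ne i k
    · simp [doubleCoord, mulVec_diagonal, hm, two_mul]
    · simp [doubleCoord, mulVec_diagonal, hi]

lemma evenSublattice_eq_range_doubleCoord (hG : G.IsSymm) {k : Fin n}
    (hk : ∀ i, Odd (G i i) ↔ i = k) :
    evenSublattice hG = LinearMap.range (doubleCoord k).mulVecLin := by
  ext x
  rw [mem_evenSublattice_iff_even_apply hG hk, mem_range_doubleCoord]

theorem even_sublattice_odd_unimodular_general (hG : G.IsSymm) {k : Fin n}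
    (hk : ∀ i, Odd (G i i) ↔ i = k) :
    ∃ S : Submodule ℤ (Fin n → ℤ),
      (∀ x, x ∈ S ↔ Even (bform G x x)) ∧
      S.toAddSubgroup.index = 2 ∧
      (∃ e : S ≃ₗ[ℤ] (Fin n → ℤ),
        ∀ x y : S, bform ((doubleCoord k)ᵀ * G * doubleCoord k) (e x) (e y) = bform G x y) ∧
      (∀ S' : AddSubgroup (Fin n → ℤ), S'.index = 2 →
        (∀ x ∈ S', Even (bform G x x)) → S' = S.toAddSubgroup) := by
  have hv : Odd (bform G (Pi.single k 1) (Pi.single k 1)) := by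
    rw [bform_single_one, hk]
  refine ⟨evenSublattice hG, fun _ => mem_evenSublattice hG, index_evenSublattice hG hv, ?_,
    fun _ => eq_evenSublattice_of_index_eq_two hG hv⟩
  rw [evenSublattice_eq_range_doubleCoord hG hk]
  exact exists_isometry_range_mulVecLin G (det_doubleCoord k ▸ two_ne_zero)

end Bform

lemma gramT_isSymm : gramT.IsSymm := by decide

lemma odd_gramT_diag_iff (i : Fin 11) : Odd (gramT i i) ↔ i = 0 := by
  decide +revert

lemma gramT0_eq_doubleCoord : gramT0 = (doubleCoord 0)ᵀ * gramT * doubleCoord 0 := by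
  decide

/-- The set `T₀` of vectors of even norm in `T = ⟨1⟩ ⊕ U ⊕ E8` is a sublattice of index 2,
it is isometric to `⟨4⟩ ⊕ U ⊕ E8`, and it is the unique index-2 subgroup of `T` all of whose
elements have even norm. -/
theorem even_sublattice_odd_unimodular :
    ∃ S : Submodule ℤ (Fin 11 → ℤ),
      (∀ x, x ∈ S ↔ Even (bform gramT x x)) ∧
      S.toAddSubgroup.index = 2 ∧
      (∃ e : S ≃ₗ[ℤ] (Fin 11 → ℤ),
        ∀ x y : S, bform gramT0 (e x) (e y) = bform gramT x y) ∧
      (∀ S' : AddSubgroup (Fin 11 → ℤ), S'.index = 2 →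
        (∀ x ∈ S', Even (bform gramT x x)) → S' = S.toAddSubgroup) :=
  gramT0_eq_doubleCoord ▸ even_sublattice_odd_unimodular_general gramT_isSymm odd_gramT_diag_iff
end

section
/- Let M be the even lattice U ⊕ D9 of rank 11. Then the natural homomorphism O(M) → O(q_M), sending an integral isometry of M to the induced automorphism of the discriminant group A_M preserving the discriminant quadratic form q_M, is surjective. -/
open Matrix

/-- The negative definite lattice `D₉` (negative of the Cartan matrix of `D₉`). -/
abbrev latD9 : Matrix (Fin 9) (Fin 9) ℤ :=
  !![-2,  1,  0,  0,  0,  0,  0,  0,  0;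
      1, -2,  1,  0,  0,  0,  0,  0,  0;
      0,  1, -2,  1,  0,  0,  0,  0,  0;
      0,  0,  1, -2,  1,  0,  0,  0,  0;
      0,  0,  0,  1, -2,  1,  0,  0,  0;
      0,  0,  0,  0,  1, -2,  1,  0,  0;
      0,  0,  0,  0,  0,  1, -2,  1,  1;
      0,  0,  0,  0,  0,  0,  1, -2,  0;
      0,  0,  0,  0,  0,  0,  1,  0, -2]

/-- Coordinatewise coercion `ℤⁿ → ℚⁿ` as a `ℤ`-linear map. -/
def castMap (n : ℕ) : (Fin n → ℤ) →ₗ[ℤ] (Fin n → ℚ) :=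
  (Algebra.linearMap ℤ ℚ).compLeft (Fin n)

/-- The standard lattice `ℤⁿ ⊆ ℚⁿ`. -/
def intLat (n : ℕ) : Submodule ℤ (Fin n → ℚ) := LinearMap.range (castMap n)

/-- The dual lattice `L* = {x ∈ ℚⁿ : Gx ∈ ℤⁿ}` of the lattice with Gram matrix `G`. -/
def dualLat {n : ℕ} (G : Matrix (Fin n) (Fin n) ℤ) : Submodule ℤ (Fin n → ℚ) :=
  Submodule.comap ((Matrix.mulVecLin (G.map (Int.cast : ℤ → ℚ))).restrictScalars ℤ) (intLat n)

/-- The discriminant group `A_L = L*/ℤⁿ`. -/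
abbrev discGroup {n : ℕ} (G : Matrix (Fin n) (Fin n) ℤ) :=
  dualLat G ⧸ (intLat n).comap (dualLat G).subtype

/-- The class of a dual vector in the discriminant group `A_L`. -/
def dmk {n : ℕ} {G : Matrix (Fin n) (Fin n) ℤ} (x : dualLat G) : discGroup G :=
  Submodule.Quotient.mk x

/-- The rational quadratic form `x ↦ xᵀGx` on `ℚⁿ`; on the dual lattice of an even lattice,
its reduction mod `2ℤ` is the discriminant quadratic form `q_L`. -/
def qQ {n : ℕ} (G : Matrix (Fin n) (Fin n) ℤ) (x : Fin n → ℚ) : ℚ :=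
  x ⬝ᵥ (G.map (Int.cast : ℤ → ℚ)).mulVec x

/-- An automorphism of the discriminant group preserves the discriminant quadratic form
`q_L : A_L → ℚ/2ℤ`. -/
def PreservesDiscForm {n : ℕ} {G : Matrix (Fin n) (Fin n) ℤ}
    (φ : discGroup G ≃+ discGroup G) : Prop :=
  ∀ x y : dualLat G, φ (dmk x) = dmk y →
    ∃ m : ℤ, qQ G (y : Fin n → ℚ) - qQ G (x : Fin n → ℚ) = 2 * m

/-- `M = U ⊕ D9`, an even lattice of rank 11. -/
def gramM : Matrix (Fin 11) (Fin 11) ℤ := dsum latU latD9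

/-!
A unimodular summand does not change the discriminant group, so `A_M ≅ A_{D₉}`. The last coordinate
of `x ∈ D₉*` in the basis of simple roots lies in `¼ℤ`, and all the other ones are congruent mod `ℤ`
to integral multiples of it. Hence the class of `x` is determined by `x₉ mod ℤ`, and `A_{D₉}` is
cyclic of order 4, generated by the spin weight. The only automorphisms of `ℤ/4` are `±1`, and they
are induced by the isometries `±1` of `M`.
-/

section Lattice

variable {n : ℕ} {G : Matrix (Fin n) (Fin n) ℤ}

theorem mem_intLat {x : Fin n → ℚ} : x ∈ intLat n ↔ ∀ i, ∃ a : ℤ, (a : ℚ) = x i :=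
  ⟨fun ⟨a, ha⟩ i => ⟨a i, congrFun ha i⟩, fun h => ⟨fun i => (h i).choose,
    funext fun i => (h i).choose_spec⟩⟩

theorem mem_dualLat {x : Fin n → ℚ} :
    x ∈ dualLat G ↔ G.map (Int.cast : ℤ → ℚ) *ᵥ x ∈ intLat n :=
  Iff.rfl

theorem dmk_eq_zero_iff {x : dualLat G} : dmk x = 0 ↔ (x : Fin n → ℚ) ∈ intLat n :=
  Submodule.Quotient.mk_eq_zero _

theorem dmk_zsmul (k : ℤ) (x : dualLat G) : dmk (k • x) = k • dmk x :=
  rfl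

theorem mem_intLat_of_isUnit_det (hG : IsUnit G.det) {x : Fin n → ℚ} (hx : x ∈ dualLat G) :
    x ∈ intLat n := by
  obtain ⟨a, ha⟩ := mem_dualLat.1 hx
  have hinv : G⁻¹.map (Int.cast : ℤ → ℚ) * G.map Int.cast = 1 := by
    rw [← Matrix.map_mul_intCast, Matrix.nonsing_inv_mul G hG]
    simp
  refine ⟨G⁻¹ *ᵥ a, ?_⟩
  calc castMap n (G⁻¹ *ᵥ a) = G⁻¹.map Int.cast *ᵥ castMap n a :=
        funext (RingHom.map_mulVec (Int.castRingHom ℚ) G⁻¹ a)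
    _ = x := by rw [ha, Matrix.mulVec_mulVec, hinv, Matrix.one_mulVec]

theorem subsingleton_discGroup_of_isUnit_det (hG : IsUnit G.det) : Subsingleton (discGroup G) :=
  Submodule.Quotient.subsingleton_iff.2 <|
    eq_top_iff.2 fun x _ => mem_intLat_of_isUnit_det hG x.2

end Lattice

section DirectSum

variable {a b : ℕ} {A : Matrix (Fin a) (Fin a) ℤ} {B : Matrix (Fin b) (Fin b) ℤ}

theorem mem_intLat_add {z : Fin (a + b) → ℚ} :
    z ∈ intLat (a + b) ↔ z ∘ Fin.castAdd b ∈ intLat a ∧ z ∘ Fin.natAdd a ∈ intLat b := by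
  simp only [mem_intLat, Fin.forall_fin_add, Function.comp_apply]

theorem dsum_mulVec_comp_castAdd (z : Fin (a + b) → ℚ) :
    ((dsum A B).map (Int.cast : ℤ → ℚ) *ᵥ z) ∘ Fin.castAdd b =
      A.map (Int.cast : ℤ → ℚ) *ᵥ (z ∘ Fin.castAdd b) := by
  ext i
  simp [dsum, Matrix.mulVec, dotProduct, Fin.sum_univ_add]

theorem dsum_mulVec_comp_natAdd (z : Fin (a + b) → ℚ) :
    ((dsum A B).map (Int.cast : ℤ → ℚ) *ᵥ z) ∘ Fin.natAdd a =
      B.map (Int.cast : ℤ → ℚ) *ᵥ (z ∘ Fin.natAdd a) := by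
  ext i
  simp [dsum, Matrix.mulVec, dotProduct, Fin.sum_univ_add]

theorem mem_dualLat_dsum {z : Fin (a + b) → ℚ} :
    z ∈ dualLat (dsum A B) ↔ z ∘ Fin.castAdd b ∈ dualLat A ∧ z ∘ Fin.natAdd a ∈ dualLat B := by
  simp only [mem_dualLat, mem_intLat_add, dsum_mulVec_comp_castAdd, dsum_mulVec_comp_natAdd]

variable (A B)

/-- The pair of classes in `A_K` and `A_L` of the components of a vector of `(K ⊕ L)*`, where `K`
and `L` have Gram matrices `A` and `B`. -/
def dsumClasses : dualLat (dsum A B) →ₗ[ℤ] discGroup A × discGroup B :=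
  (Submodule.mkQ _ ∘ₗ (LinearMap.funLeft ℤ ℚ (Fin.castAdd b)).restrict
      fun _ hz => (mem_dualLat_dsum.1 hz).1).prod
    (Submodule.mkQ _ ∘ₗ (LinearMap.funLeft ℤ ℚ (Fin.natAdd a)).restrict
      fun _ hz => (mem_dualLat_dsum.1 hz).2)

theorem ker_dsumClasses :
    LinearMap.ker (dsumClasses A B) =
      (intLat (a + b)).comap (dualLat (dsum A B)).subtype := by
  ext z
  rw [LinearMap.mem_ker, Submodule.mem_comap]
  exact Prod.ext_iff.trans ((and_congr dmk_eq_zero_iff dmk_eq_zero_iff).trans mem_intLat_add.symm)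

theorem dsumClasses_surjective : Function.Surjective (dsumClasses A B) := by
  rintro ⟨p, q⟩
  obtain ⟨x, rfl⟩ := Submodule.mkQ_surjective _ p
  obtain ⟨y, rfl⟩ := Submodule.mkQ_surjective _ q
  have hleft : Fin.append x.1 y.1 ∘ Fin.castAdd b = x.1 := funext (Fin.append_left _ _)
  have hright : Fin.append x.1 y.1 ∘ Fin.natAdd a = y.1 := funext (Fin.append_right _ _)
  have hmem : Fin.append x.1 y.1 ∈ dualLat (dsum A B) :=
    mem_dualLat_dsum.2 ⟨by rw [hleft]; exact x.2, by rw [hright]; exact y.2⟩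
  refine ⟨⟨Fin.append x.1 y.1, hmem⟩, ?_⟩
  exact Prod.ext (congrArg dmk (Subtype.ext hleft)) (congrArg dmk (Subtype.ext hright))

/-- The isomorphism `A_{K ⊕ L} ≅ A_K × A_L` of discriminant groups. -/
noncomputable def discGroupDsumEquiv : discGroup (dsum A B) ≃+ discGroup A × discGroup B :=
  ((Submodule.quotEquivOfEq _ _ (ker_dsumClasses A B).symm).trans
    ((dsumClasses A B).quotKerEquivOfSurjective (dsumClasses_surjective A B))).toAddEquiv

end DirectSum

section DiscriminantD9

/-- The weight `½(ε₁ + ⋯ + ε₉)` of the half-spin representation, in the basis of simple roots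
`εᵢ - εᵢ₊₁` (`1 ≤ i ≤ 8`), `ε₈ + ε₉` of `D₉`. -/
def spinWeight : Fin 9 → ℚ := ![1/2, 1, 3/2, 2, 5/2, 3, 7/2, 7/4, 9/4]

theorem latD9_mulVec_spinWeight :
    latD9.map (Int.cast : ℤ → ℚ) *ᵥ spinWeight = -Pi.single 8 1 := by
  decide +kernel

theorem spinWeight_mem_dualLat : spinWeight ∈ dualLat latD9 := by
  rw [mem_dualLat, latD9_mulVec_spinWeight]
  exact ⟨-Pi.single 8 1, by decide +kernel⟩

/-- The class of the spin weight, a generator of `A_{D₉}`. -/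
def spinClass : discGroup latD9 := dmk ⟨spinWeight, spinWeight_mem_dualLat⟩

variable {x : Fin 9 → ℚ}

theorem exists_rows_eq_of_mem_dualLat_latD9 (hx : x ∈ dualLat latD9) :
    ∃ a : Fin 9 → ℤ,
      (a 0 : ℚ) = -2 * x 0 + x 1 ∧ (a 1 : ℚ) = x 0 - 2 * x 1 + x 2 ∧
      (a 2 : ℚ) = x 1 - 2 * x 2 + x 3 ∧ (a 3 : ℚ) = x 2 - 2 * x 3 + x 4 ∧
      (a 4 : ℚ) = x 3 - 2 * x 4 + x 5 ∧ (a 5 : ℚ) = x 4 - 2 * x 5 + x 6 ∧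
      (a 6 : ℚ) = x 5 - 2 * x 6 + x 7 + x 8 ∧ (a 7 : ℚ) = x 6 - 2 * x 7 ∧
      (a 8 : ℚ) = x 6 - 2 * x 8 := by
  choose a ha using mem_intLat.1 (mem_dualLat.1 hx)
  refine ⟨a, ?_⟩
  simp [ha, Matrix.mulVec, dotProduct, Fin.sum_univ_succ, sub_eq_add_neg, add_assoc]

theorem exists_intCast_eq_four_mul_last_of_mem_dualLat (hx : x ∈ dualLat latD9) :
    ∃ k : ℤ, (k : ℚ) = 4 * x 8 := by
  obtain ⟨a, h0, h1, h2, h3, h4, h5, h6, h7, h8⟩ := exists_rows_eq_of_mem_dualLat_latD9 hx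
  -- The coefficients are those of `4 • spinWeight`, whose pairing with `x` is `-4 * x 8`.
  refine ⟨-(2 * a 0 + 4 * a 1 + 6 * a 2 + 8 * a 3 + 10 * a 4 + 12 * a 5 + 14 * a 6 + 7 * a 7
    + 9 * a 8), ?_⟩
  push_cast
  linarith

theorem mem_intLat_of_last_eq_intCast (hx : x ∈ dualLat latD9) {m : ℤ} (hm : (m : ℚ) = x 8) :
    x ∈ intLat 9 := by
  obtain ⟨a, h0, h1, h2, h3, h4, h5, h6, h7, h8⟩ := exists_rows_eq_of_mem_dualLat_latD9 hx
  -- `x 0 - 2 * x 8` is the pairing of `x` with the lattice vector `2ω₉ - ω₁`, whose coordinates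
  -- are the coefficients below; the rows then determine `x 1`, …, `x 7` recursively.
  obtain ⟨m0, hm0⟩ : ∃ m0 : ℤ, (m0 : ℚ) = x 0 :=
    ⟨2 * m + a 1 + 2 * a 2 + 3 * a 3 + 4 * a 4 + 5 * a 5 + 6 * a 6 + 3 * a 7 + 4 * a 8, by
      push_cast; linarith⟩
  obtain ⟨m1, hm1⟩ : ∃ m1 : ℤ, (m1 : ℚ) = x 1 := ⟨a 0 + 2 * m0, by push_cast; linarith⟩
  obtain ⟨m2, hm2⟩ : ∃ m2 : ℤ, (m2 : ℚ) = x 2 := ⟨a 1 - m0 + 2 * m1, by push_cast; linarith⟩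
  obtain ⟨m3, hm3⟩ : ∃ m3 : ℤ, (m3 : ℚ) = x 3 := ⟨a 2 - m1 + 2 * m2, by push_cast; linarith⟩
  obtain ⟨m4, hm4⟩ : ∃ m4 : ℤ, (m4 : ℚ) = x 4 := ⟨a 3 - m2 + 2 * m3, by push_cast; linarith⟩
  obtain ⟨m5, hm5⟩ : ∃ m5 : ℤ, (m5 : ℚ) = x 5 := ⟨a 4 - m3 + 2 * m4, by push_cast; linarith⟩
  obtain ⟨m6, hm6⟩ : ∃ m6 : ℤ, (m6 : ℚ) = x 6 := ⟨a 5 - m4 + 2 * m5, by push_cast; linarith⟩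
  obtain ⟨m7, hm7⟩ : ∃ m7 : ℤ, (m7 : ℚ) = x 7 := ⟨a 6 - m5 + 2 * m6 - m, by push_cast; linarith⟩
  refine mem_intLat.2 fun i => ⟨![m0, m1, m2, m3, m4, m5, m6, m7, m] i, ?_⟩
  fin_cases i <;> assumption

theorem dmk_latD9_eq_zero_iff {x : dualLat latD9} :
    dmk x = 0 ↔ ∃ m : ℤ, (m : ℚ) = (x : Fin 9 → ℚ) 8 :=
  ⟨fun h => mem_intLat.1 (dmk_eq_zero_iff.1 h) 8, fun ⟨_, hm⟩ =>
    dmk_eq_zero_iff.2 (mem_intLat_of_last_eq_intCast x.2 hm)⟩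

theorem mem_zmultiples_spinClass (c : discGroup latD9) : c ∈ AddSubgroup.zmultiples spinClass := by
  obtain ⟨x, rfl⟩ : ∃ x, dmk x = c := Submodule.mkQ_surjective _ c
  obtain ⟨k, hk⟩ := exists_intCast_eq_four_mul_last_of_mem_dualLat x.2
  have hdiff : dmk (k • ⟨spinWeight, spinWeight_mem_dualLat⟩ - x) = 0 := by
    refine dmk_latD9_eq_zero_iff.2 ⟨2 * k, ?_⟩
    have hlast : ((2 * k : ℤ) : ℚ) = k * (9 / 4) - (x : Fin 9 → ℚ) 8 := by
      push_cast
      linarith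
    simpa [spinWeight] using hlast
  exact ⟨k, sub_eq_zero.1 hdiff⟩

theorem zsmul_spinClass_eq_zero_iff {k : ℤ} : k • spinClass = 0 ↔ 4 ∣ k := by
  rw [spinClass, ← dmk_zsmul, dmk_latD9_eq_zero_iff]
  have hlast (m : ℤ) : (m : ℚ) = (k • spinWeight) 8 ↔ 4 * m = 9 * k := by
    have hcoord : (k • spinWeight) 8 = k * (9 / 4) := by simp [spinWeight]
    rw [hcoord, ← Int.cast_inj (α := ℚ)]
    push_cast
    constructor <;> intro h <;> linarith
  simp only [Submodule.coe_smul, hlast]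
  constructor
  · rintro ⟨m, hm⟩
    omega
  · rintro ⟨j, rfl⟩
    exact ⟨9 * j, by ring⟩

theorem addOrderOf_spinClass : addOrderOf spinClass = 4 := by
  apply Nat.dvd_antisymm
  · exact Int.natCast_dvd_natCast.1 <| addOrderOf_dvd_iff_zsmul_eq_zero.2 <|
      zsmul_spinClass_eq_zero_iff.2 dvd_rfl
  · exact Int.natCast_dvd_natCast.1 <| zsmul_spinClass_eq_zero_iff.1 <|
      addOrderOf_dvd_iff_zsmul_eq_zero.1 dvd_rfl

theorem card_discGroup_latD9 : Nat.card (discGroup latD9) = 4 :=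
  (addOrderOf_eq_card_of_forall_mem_zmultiples mem_zmultiples_spinClass).symm.trans
    addOrderOf_spinClass

/-- The isomorphism `A_{D₉} ≅ ℤ/4` sending the class of the spin weight to `1`. -/
noncomputable def discGroupLatD9Equiv : discGroup latD9 ≃+ ZMod 4 :=
  (zmodAddEquivOfGenerator mem_zmultiples_spinClass card_discGroup_latD9).symm

end DiscriminantD9

theorem isUnit_det_latU : IsUnit latU.det := by
  decide

/-- The isomorphism `A_M ≅ A_{D₉} ≅ ℤ/4`. -/
noncomputable def discGroupGramMEquiv : discGroup gramM ≃+ ZMod 4 :=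
  letI : Unique (discGroup latU) :=
    @uniqueOfSubsingleton _ (subsingleton_discGroup_of_isUnit_det isUnit_det_latU) 0
  ((discGroupDsumEquiv latU latD9).trans AddEquiv.uniqueProd).trans discGroupLatD9Equiv

section PlusMinusOne

theorem exists_units_forall_apply_eq_mul {n : ℕ} (f : ZMod n ≃+ ZMod n) :
    ∃ u : (ZMod n)ˣ, ∀ x, f x = u * x := by
  obtain ⟨u, hu⟩ := (ZMod.AddAutEquivUnits n).symm.surjective f
  exact ⟨u.toMul, fun x => by rw [← hu]; rfl⟩

theorem forall_eq_self_or_forall_eq_neg {A : Type*} [AddGroup A] {n : ℕ} (e : A ≃+ ZMod n)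
    (hn : ∀ u : (ZMod n)ˣ, u = 1 ∨ u = -1) (φ : A ≃+ A) :
    (∀ c, φ c = c) ∨ ∀ c, φ c = -c := by
  obtain ⟨u, hu⟩ := exists_units_forall_apply_eq_mul ((e.symm.trans φ).trans e)
  have hφ (c : A) : e (φ c) = u * e c := by simpa using hu (e c)
  exact (hn u).imp (fun h c => e.injective (by simp [hφ, h]))
    fun h c => e.injective (by simp [hφ, h])

variable {n : ℕ} {G : Matrix (Fin n) (Fin n) ℤ}

/-- The automorphism `φ` of `A_L` is the image of an isometry of `L` under the natural map. -/
def IsInducedByIsometry (φ : discGroup G ≃+ discGroup G) : Prop :=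
  ∃ P : Matrix (Fin n) (Fin n) ℤ, IsUnit P.det ∧ Pᵀ * G * P = G ∧
    ∀ x y : dualLat G,
      (y : Fin n → ℚ) = (P.map (Int.cast : ℤ → ℚ)).mulVec (x : Fin n → ℚ) → φ (dmk x) = dmk y

variable {φ : discGroup G ≃+ discGroup G}

theorem isInducedByIsometry_of_forall_eq_self (hφ : ∀ c, φ c = c) : IsInducedByIsometry φ := by
  refine ⟨1, by simp, by simp, fun x y hxy => ?_⟩
  obtain rfl : y = x := Subtype.ext (by simpa using hxy)
  exact hφ _

theorem isInducedByIsometry_of_forall_eq_neg (hφ : ∀ c, φ c = -c) : IsInducedByIsometry φ := by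
  refine ⟨-1, ?_, by simp, fun x y hxy => ?_⟩
  · rw [Matrix.det_neg, Matrix.det_one, mul_one]
    exact isUnit_one.neg.pow _
  obtain rfl : y = -x := Subtype.ext (by simpa [Matrix.map_neg, Matrix.neg_mulVec] using hxy)
  exact hφ _

theorem isInducedByIsometry_of_addEquiv_zmod {m : ℕ} (e : discGroup G ≃+ ZMod m)
    (hm : ∀ u : (ZMod m)ˣ, u = 1 ∨ u = -1) (φ : discGroup G ≃+ discGroup G) :
    IsInducedByIsometry φ :=
  (forall_eq_self_or_forall_eq_neg e hm φ).elim isInducedByIsometry_of_forall_eq_self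
    isInducedByIsometry_of_forall_eq_neg

end PlusMinusOne

theorem O_to_Oq_surjective_UD9_general (φ : discGroup gramM ≃+ discGroup gramM) :
    IsInducedByIsometry φ :=
  isInducedByIsometry_of_addEquiv_zmod discGroupGramMEquiv (by decide) φ

/-- The natural homomorphism `O(M) → O(q_M)` is surjective for `M = U ⊕ D9` :
every automorphism of the discriminant group preserving the discriminant quadratic form
is induced by an integral isometry `P` of `M` (which acts on `M* ⊆ ℚ¹¹` by `x ↦ Px`). -/
theorem O_to_Oq_surjective_UD9 :
    ∀ φ : discGroup gramM ≃+ discGroup gramM, PreservesDiscForm φ →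
      ∃ P : Matrix (Fin 11) (Fin 11) ℤ, IsUnit P.det ∧ Pᵀ * gramM * P = gramM ∧
        ∀ x y : dualLat gramM,
          (y : Fin 11 → ℚ) = (P.map (Int.cast : ℤ → ℚ)).mulVec (x : Fin 11 → ℚ) →
            φ (dmk x) = dmk y := by
  exact fun φ _ => O_to_Oq_surjective_UD9_general φ
end

section
/- In the rank-12 lattice L = U ⊕ U(2) ⊕ E8(2) (which is U ⊕ 𝔼(2) where 𝔼 = E8 ⊕ U is the Enriques lattice), there exists a vector v with norm v·v = -2 such that the orthogonal complement v^⊥ = {x ∈ L : x·v = 0}, with the restricted form, is isometric to the rank-11 lattice ⟨2⟩ ⊕ U(2) ⊕ E8(2). -/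
open Matrix

/-- `L = U ⊕ U(2) ⊕ E8(2) = U ⊕ 𝔼(2)` where `𝔼 = E8 ⊕ U` is the Enriques lattice. -/
def gramL : Matrix (Fin 12) (Fin 12) ℤ := dsum (dsum latU (2 • latU)) (2 • latE8)

/-- `⟨2⟩ ⊕ U(2) ⊕ E8(2)`. -/
def gramC : Matrix (Fin 11) (Fin 11) ℤ := dsum (dsum !![(2 : ℤ)] (2 • latU)) (2 • latE8)

/-! In the hyperbolic plane with basis `e, f` the vector `e - f` has norm `-2`, and its orthogonal
complement is generated by `e + f`, of norm `2`. Adding orthogonal summands `B` to a lattice adds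
them to the orthogonal complement of a vector of that lattice, so `(e - f)^⊥ = ⟨2⟩ ⊕ B` in
`U ⊕ B`. -/

theorem bform_eq_toBilin' {n : ℕ} (G : Matrix (Fin n) (Fin n) ℤ) (x y : Fin n → ℤ) :
    bform G x y = Matrix.toBilin' G x y :=
  (Matrix.toBilin'_apply' G x y).symm

/-- `Fin.appendEquiv` as a linear equivalence. -/
def appendLinearEquiv (R M : Type*) [Semiring R] [AddCommMonoid M] [Module R M] (m n : ℕ) :
    ((Fin m → M) × (Fin n → M)) ≃ₗ[R] (Fin (m + n) → M) :=
  LinearEquiv.symm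
    { (Fin.appendEquiv m n).symm with
      map_add' := fun _ _ => rfl
      map_smul' := fun _ _ => rfl }

@[simp]
theorem appendLinearEquiv_apply {R M : Type*} [Semiring R] [AddCommMonoid M] [Module R M]
    {m n : ℕ} (p : (Fin m → M) × (Fin n → M)) :
    appendLinearEquiv R M m n p = Fin.append p.1 p.2 :=
  rfl

section OrthogonalComplement

variable {n k : ℕ}

/-- The orthogonal complement `v^⊥ = {x | x ⋅ v = 0}` in the lattice with Gram matrix `G`. The
matrix `G` need not be symmetric, and `v` stands in the second argument of the form. -/
def orthogonalComplement (G : Matrix (Fin n) (Fin n) ℤ) (v : Fin n → ℤ) :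
    Submodule ℤ (Fin n → ℤ) :=
  LinearMap.ker ((Matrix.toBilin' G).flip v)

theorem mem_orthogonalComplement {G : Matrix (Fin n) (Fin n) ℤ} {v x : Fin n → ℤ} :
    x ∈ orthogonalComplement G v ↔ bform G x v = 0 := by
  simp [orthogonalComplement, bform_eq_toBilin']

/-- Isometries from the orthogonal complement of `v` in the lattice with Gram matrix `G` onto the
lattice with Gram matrix `C`. -/
abbrev OrthogonalIsometry (G : Matrix (Fin n) (Fin n) ℤ) (v : Fin n → ℤ)
    (C : Matrix (Fin k) (Fin k) ℤ) : Type :=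
  ((Matrix.toBilin' G).restrict (orthogonalComplement G v)).IsometryEquiv (Matrix.toBilin' C)

theorem OrthogonalIsometry.bform_apply {G : Matrix (Fin n) (Fin n) ℤ} {v : Fin n → ℤ}
    {C : Matrix (Fin k) (Fin k) ℤ} (e : OrthogonalIsometry G v C)
    (x y : orthogonalComplement G v) : bform C (e x) (e y) = bform G x y := by
  simp [bform_eq_toBilin']

end OrthogonalComplement

section DirectSum

variable {m n k : ℕ}

theorem bform_dsum (A : Matrix (Fin m) (Fin m) ℤ) (B : Matrix (Fin n) (Fin n) ℤ)
    (x y : Fin (m + n) → ℤ) :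
    bform (dsum A B) x y =
      bform A (fun i => x (Fin.castAdd n i)) (fun i => y (Fin.castAdd n i)) +
        bform B (fun i => x (Fin.natAdd m i)) (fun i => y (Fin.natAdd m i)) := by
  simp [bform, dsum, dotProduct, mulVec, Fin.sum_univ_add]

variable {A : Matrix (Fin m) (Fin m) ℤ} {v : Fin m → ℤ}
  {C : Matrix (Fin k) (Fin k) ℤ} (B : Matrix (Fin n) (Fin n) ℤ)

theorem bform_dsum_append_zero (x : Fin (m + n) → ℤ) :
    bform (dsum A B) x (Fin.append v 0) = bform A (fun i => x (Fin.castAdd n i)) v := by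
  simp [bform_dsum, bform_eq_toBilin' B, ← Pi.zero_def]

theorem mem_orthogonalComplement_dsum {x : Fin (m + n) → ℤ} :
    x ∈ orthogonalComplement (dsum A B) (Fin.append v 0) ↔
      (fun i => x (Fin.castAdd n i)) ∈ orthogonalComplement A v := by
  simp only [mem_orthogonalComplement, bform_dsum_append_zero]

/-- The decomposition `(v, 0)^⊥ = v^⊥ ⊕ ℤⁿ` of an orthogonal complement in the lattice `A ⊕ B`. -/
def orthogonalComplementDsumEquiv :
    orthogonalComplement (dsum A B) (Fin.append v 0) ≃ₗ[ℤ]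
      orthogonalComplement A v × (Fin n → ℤ) where
  toFun x := (⟨_, (mem_orthogonalComplement_dsum B).1 x.2⟩, fun i => x.1 (Fin.natAdd m i))
  map_add' _ _ := rfl
  map_smul' _ _ := rfl
  invFun p := ⟨Fin.append p.1 p.2, by simp [mem_orthogonalComplement_dsum]⟩
  left_inv x := by simp [Fin.append_castAdd_natAdd]
  right_inv p := by simp

/-- The isometry `(v, 0)^⊥ = v^⊥ ⊕ B ≅ C ⊕ B` in the lattice `A ⊕ B` induced by an isometry
`v^⊥ ≅ C` in the lattice `A`. -/
def OrthogonalIsometry.dsumRight (e : OrthogonalIsometry A v C) :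
    OrthogonalIsometry (dsum A B) (Fin.append v 0) (dsum C B) where
  toLinearEquiv := orthogonalComplementDsumEquiv B ≪≫ₗ
    e.toLinearEquiv.prodCongr (LinearEquiv.refl ℤ _) ≪≫ₗ appendLinearEquiv ℤ ℤ k n
  map_app' x y := by
    simp [← bform_eq_toBilin', bform_dsum, e.bform_apply, orthogonalComplementDsumEquiv]

end DirectSum

section HyperbolicPlane

theorem bform_latU (x y : Fin 2 → ℤ) : bform latU x y = x 0 * y 1 + x 1 * y 0 := by
  simp [bform, dotProduct, mulVec, Fin.sum_univ_two]

theorem bform_rankOne (a : ℤ) (x y : Fin 1 → ℤ) : bform !![a] x y = a * (x 0 * y 0) := by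
  simp [bform, dotProduct, mulVec, mul_left_comm]

theorem mem_orthogonalComplement_latU {x : Fin 2 → ℤ} :
    x ∈ orthogonalComplement latU ![1, -1] ↔ x 0 = x 1 := by
  simp [mem_orthogonalComplement, bform_latU, neg_add_eq_zero]

/-- The isometry `(1, -1)^⊥ = ℤ (1, 1) ≅ ⟨2⟩` in the hyperbolic plane. -/
def orthogonalIsometryLatU : OrthogonalIsometry latU ![1, -1] !![2] where
  toFun x _ := x.1 0
  map_add' _ _ := rfl
  map_smul' _ _ := rfl
  invFun z := ⟨fun _ => z 0, mem_orthogonalComplement_latU.2 rfl⟩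
  left_inv x := by
    ext i
    fin_cases i
    exacts [rfl, mem_orthogonalComplement_latU.1 x.2]
  right_inv z := by
    ext i
    rw [Subsingleton.elim i 0]
  map_app' x y := by
    have hx : x.1 0 = x.1 1 := mem_orthogonalComplement_latU.1 x.2
    have hy : y.1 0 = y.1 1 := mem_orthogonalComplement_latU.1 y.2
    change Matrix.toBilin' !![2] (fun _ => x.1 0) (fun _ => y.1 0) = Matrix.toBilin' latU x.1 y.1
    rw [← bform_eq_toBilin', ← bform_eq_toBilin', bform_rankOne, bform_latU, ← hx, ← hy, two_mul]

end HyperbolicPlane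

theorem exists_norm_neg_two_orthogonal_complement_general {m n : ℕ}
    (A : Matrix (Fin m) (Fin m) ℤ) (B : Matrix (Fin n) (Fin n) ℤ) :
    ∃ v : Fin (2 + m + n) → ℤ, bform (dsum (dsum latU A) B) v v = -2 ∧
      ∃ W : Submodule ℤ (Fin (2 + m + n) → ℤ),
        (∀ x, x ∈ W ↔ bform (dsum (dsum latU A) B) x v = 0) ∧
          ∃ e : W ≃ₗ[ℤ] (Fin (1 + m + n) → ℤ),
            ∀ x y : W, bform (dsum (dsum !![2] A) B) (e x) (e y) =
              bform (dsum (dsum latU A) B) x y := by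
  let e := (orthogonalIsometryLatU.dsumRight A).dsumRight B
  refine ⟨Fin.append (Fin.append ![1, -1] 0) 0, ?_, orthogonalComplement _ _,
    fun _ => mem_orthogonalComplement, e.toLinearEquiv, e.bform_apply⟩
  simp [bform_dsum_append_zero, bform_latU]

/-- In `L = U ⊕ U(2) ⊕ E8(2)` there is a vector `v` of norm `-2` whose orthogonal
complement `v^⊥`, with the restricted form, is isometric to `⟨2⟩ ⊕ U(2) ⊕ E8(2)`. -/
theorem exists_norm_neg_two_orthogonal_complement :
    ∃ v : Fin 12 → ℤ, bform gramL v v = -2 ∧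
      ∃ W : Submodule ℤ (Fin 12 → ℤ), (∀ x, x ∈ W ↔ bform gramL x v = 0) ∧
        ∃ e : W ≃ₗ[ℤ] (Fin 11 → ℤ),
          ∀ x y : W, bform gramC (e x) (e y) = bform gramL x y :=
  exists_norm_neg_two_orthogonal_complement_general (2 • latU) (2 • latE8)
end

section
/- Let V' ⊂ ℂ[x0,x1,x2] be the linear subspace of homogeneous quintic forms of the shape F = a·x0³x1² + x0²·A1(x1,x2) + x0·x2·A2(x1,x2) + x2²·A3(x1,x2), where a ∈ ℂ and A1, A2, A3 are homogeneous polynomials in x1, x2 of degree 3 (so dim V' = 13). Then an invertible linear change of coordinates T ∈ GL3(ℂ) satisfies F∘T ∈ V' for every F ∈ V' if and only if T has the form x0 ↦ a·x0 + b·x2, x1 ↦ c·x1, x2 ↦ d·x2 (with a, c, d nonzero). -/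
open MvPolynomial

/-- The linear substitution action of a matrix `T ∈ GL₃(ℂ)` on polynomials:
`(F ∘ T)(x) = F (T x)`, i.e. `xᵢ ↦ ∑ⱼ Tᵢⱼ xⱼ`. -/
noncomputable def subst (T : Matrix (Fin 3) (Fin 3) ℂ) (F : MvPolynomial (Fin 3) ℂ) :
    MvPolynomial (Fin 3) ℂ :=
  aeval (fun i => ∑ j : Fin 3, C (T i j) * X j) F

/-- The space `V'` of quintic forms
`a·x0³x1² + x0²·A1(x1,x2) + x0·x2·A2(x1,x2) + x2²·A3(x1,x2)` with `A1, A2, A3`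
homogeneous of degree 3 in the variables `x1, x2`. -/
def Vspace' : Set (MvPolynomial (Fin 3) ℂ) :=
  {F | ∃ (a : ℂ) (A1 A2 A3 : MvPolynomial (Fin 3) ℂ),
    A1.IsHomogeneous 3 ∧ A1 ∈ supported ℂ ({1, 2} : Set (Fin 3)) ∧
    A2.IsHomogeneous 3 ∧ A2 ∈ supported ℂ ({1, 2} : Set (Fin 3)) ∧
    A3.IsHomogeneous 3 ∧ A3 ∈ supported ℂ ({1, 2} : Set (Fin 3)) ∧
    F = C a * X 0 ^ 3 * X 1 ^ 2 + X 0 ^ 2 * A1 + X 0 * X 2 * A2 + X 2 ^ 2 * A3}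

/-!
The linear system `V'` has base points `(1:0:0)` and `(0:1:0)`, and every member meets the cuspidal
tangent `{x₁ = 0}` at `(1:0:0)` with multiplicity at least `3`. If `T` preserves `V'`, then every
member also vanishes at `T (0:1:0)` and meets the line joining `T (1:0:0)` and `T (0:0:1)` with
multiplicity at least `3` at `T (1:0:0)`. Testing these conditions on `x₂⁵`, `x₁³x₂²` and `x₀³x₁²`
makes the entries of `T` vanish one after the other. Conversely, a `T` of the stated form preserves
the span of `x₀` and `x₂` and scales `x₁` and `x₂`, so it preserves the terms in `A₁`, `A₂`, `A₃`
together; and `(a x₀ + b x₂)³ x₁²` differs from `a³ x₀³ x₁²` by a quadratic form in `x₀`, `x₂` times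
the cubic `x₁²x₂`, which is again of that shape.
-/

section FormsIn

variable {R σ τ A : Type*} [CommSemiring R] [CommSemiring A] [Algebra R A]
  {s : Set σ} {t : Set τ} {m n : ℕ} {p q : MvPolynomial σ R}

variable (R s n) in
/-- The forms of degree `n` in the variables indexed by `s`, as a submodule of the polynomials in
all variables. -/
noncomputable def formsIn : Submodule R (MvPolynomial σ R) :=
  homogeneousSubmodule σ R n ⊓ Subalgebra.toSubmodule (supported R s)

theorem mul_mem_formsIn (hp : p ∈ formsIn R s m) (hq : q ∈ formsIn R s n) :
    p * q ∈ formsIn R s (m + n) :=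
  ⟨hp.1.mul hq.1, (supported R s).mul_mem hp.2 hq.2⟩

theorem X_pow_mem_formsIn {i : σ} (hi : i ∈ s) (n : ℕ) : X i ^ n ∈ formsIn R s n :=
  ⟨isHomogeneous_X_pow i n,
    (supported R s).pow_mem (Algebra.subset_adjoin (Set.mem_image_of_mem X hi)) n⟩

theorem X_mem_formsIn {i : σ} (hi : i ∈ s) : X i ∈ formsIn R s 1 := by
  simpa only [pow_one] using X_pow_mem_formsIn (R := R) hi 1

theorem aeval_congr_of_mem_supported (hp : p ∈ supported R s) {f g : σ → A}
    (hfg : Set.EqOn f g s) : aeval f p = aeval g p :=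
  eval₂Hom_congr' rfl (fun _ hi _ ↦ hfg (mem_supported.1 hp hi)) rfl

theorem aeval_mem_formsIn (hp : p ∈ formsIn R s n) {f : σ → MvPolynomial τ R}
    (hf : ∀ i ∈ s, f i ∈ formsIn R t m) : aeval f p ∈ formsIn R t (m * n) := by
  have hg (i : σ) : s.indicator f i ∈ formsIn R t m := by
    by_cases hi : i ∈ s
    · simpa only [Set.indicator_of_mem hi] using hf i hi
    · simp only [Set.indicator_of_notMem hi, zero_mem]
  rw [aeval_congr_of_mem_supported hp.2 Set.eqOn_indicator.symm]
  exact ⟨hp.1.aeval _ fun i ↦ (hg i).1,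
    eval₂_mem (fun _ _ ↦ (supported R t).algebraMap_mem _) fun i ↦ (hg i).2⟩

theorem pow_dvd_aeval_of_mem_formsIn (hp : p ∈ formsIn R s n) {f : σ → A} {x : A}
    (hf : ∀ i ∈ s, x ∣ f i) : x ^ n ∣ aeval f p := by
  rw [aeval_def, eval₂_eq]
  refine Finset.dvd_sum fun e he ↦ Dvd.dvd.mul_left ?_ _
  have hdeg : e.degree = n := by
    by_contra h
    exact mem_support_iff.1 he (hp.1.coeff_eq_zero h)
  rw [← hdeg, Finsupp.degree_apply, ← Finset.prod_pow_eq_pow_sum]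
  exact Finset.prod_dvd_prod_of_dvd _ _ fun i hi ↦
    pow_dvd_pow_of_dvd (hf i (mem_supported.1 hp.2 ((mem_vars_iff_mem_support i).2 ⟨e, he, hi⟩))) _

theorem aeval_eq_zero_of_mem_formsIn (hp : p ∈ formsIn R s n) (hn : n ≠ 0) {f : σ → A}
    (hf : ∀ i ∈ s, f i = 0) : aeval f p = 0 := by
  simpa only [zero_pow hn, zero_dvd_iff] using
    pow_dvd_aeval_of_mem_formsIn hp (x := 0) fun i hi ↦ zero_dvd_iff.2 (hf i hi)

end FormsIn

theorem eq_zero_or_eq_zero_of_X_pow_succ_dvd {R : Type*} [CommRing R] [IsDomain R] {a b d : R}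
    {m n : ℕ} (h : Polynomial.X ^ (m + 1) ∣
      (Polynomial.C d * Polynomial.X) ^ m * (Polynomial.C a + Polynomial.C b * Polynomial.X) ^ n) :
    d = 0 ∨ a = 0 := by
  rw [mul_pow, mul_comm (_ ^ m), mul_assoc, pow_succ,
    mul_dvd_mul_iff_left (pow_ne_zero m Polynomial.X_ne_zero), Polynomial.X_dvd_iff,
    Polynomial.coeff_zero_eq_eval_zero] at h
  have h_lowest : d ^ m * a ^ n = 0 := by simpa using h
  exact (mul_eq_zero.1 h_lowest).imp eq_zero_of_pow_eq_zero eq_zero_of_pow_eq_zero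

theorem aeval_subst {A : Type*} [CommSemiring A] [Algebra ℂ A] (T : Matrix (Fin 3) (Fin 3) ℂ)
    (F : MvPolynomial (Fin 3) ℂ) (v : Fin 3 → A) :
    aeval v (subst T F) = aeval (fun i ↦ ∑ j, T i j • v j) F := by
  rw [subst, comp_aeval_apply]
  simp [Algebra.smul_def]

section QuinticSpace

variable {F A A1 A2 A3 : MvPolynomial (Fin 3) ℂ}

theorem mem_Vspace' (a : ℂ) (h1 : A1 ∈ formsIn ℂ {1, 2} 3) (h2 : A2 ∈ formsIn ℂ {1, 2} 3)
    (h3 : A3 ∈ formsIn ℂ {1, 2} 3) :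
    C a * X 0 ^ 3 * X 1 ^ 2 + X 0 ^ 2 * A1 + X 0 * X 2 * A2 + X 2 ^ 2 * A3 ∈ Vspace' :=
  ⟨a, A1, A2, A3, h1.1, h1.2, h2.1, h2.2, h3.1, h3.2, rfl⟩

theorem X_two_sq_mul_mem_Vspace' (hA : A ∈ formsIn ℂ {1, 2} 3) : X 2 ^ 2 * A ∈ Vspace' := by
  simpa using mem_Vspace' 0 (zero_mem _) (zero_mem _) hA

theorem X_one_sq_mul_X_zero_cube_mem_Vspace' :
    (X 1 ^ 2 * X 0 ^ 3 : MvPolynomial (Fin 3) ℂ) ∈ Vspace' := by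
  simpa [mul_comm] using mem_Vspace' 1 (zero_mem _) (zero_mem _) (zero_mem _)

theorem shear_mem_Vspace' (a b e : ℂ) (h1 : A1 ∈ formsIn ℂ {1, 2} 3)
    (h2 : A2 ∈ formsIn ℂ {1, 2} 3) (h3 : A3 ∈ formsIn ℂ {1, 2} 3) :
    C e * (a • X 0 + b • X 2) ^ 3 * X 1 ^ 2 + (a • X 0 + b • X 2) ^ 2 * A1 +
      (a • X 0 + b • X 2) * X 2 * A2 + X 2 ^ 2 * A3 ∈ Vspace' := by
  have hM : (X 1 ^ 2 * X 2 : MvPolynomial (Fin 3) ℂ) ∈ formsIn ℂ {1, 2} 3 :=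
    mul_mem_formsIn (X_pow_mem_formsIn (by simp) 2) (X_mem_formsIn (by simp))
  have hsmul (k : ℂ) {B : MvPolynomial (Fin 3) ℂ} (hB : B ∈ formsIn ℂ {1, 2} 3) :
      k • B ∈ formsIn ℂ {1, 2} 3 := Submodule.smul_mem _ k hB
  convert mem_Vspace' (e * a ^ 3)
    (add_mem (hsmul (a ^ 2) h1) (hsmul (3 * e * a ^ 2 * b) hM))
    (add_mem (add_mem (hsmul (2 * a * b) h1) (hsmul a h2)) (hsmul (3 * e * a * b ^ 2) hM))
    (add_mem (add_mem (add_mem (hsmul (b ^ 2) h1) (hsmul b h2)) h3) (hsmul (e * b ^ 3) hM))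
    using 1
  simp only [smul_eq_C_mul, map_mul, map_pow, map_ofNat]
  ring

theorem aeval_single_eq_zero_of_mem_Vspace' (hF : F ∈ Vspace') {j : Fin 3} (hj : j ≠ 2) :
    aeval (Pi.single j 1 : Fin 3 → ℂ) F = 0 := by
  obtain ⟨a, A1, A2, A3, hom1, supp1, -, -, -, -, rfl⟩ := hF
  have hA1 : aeval (Pi.single 0 1 : Fin 3 → ℂ) A1 = 0 :=
    aeval_eq_zero_of_mem_formsIn ⟨hom1, supp1⟩ three_ne_zero (by simp)
  fin_cases j
  · simp_all
  · simp
  · exact absurd rfl hj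

theorem X_cube_dvd_aeval_of_mem_Vspace' (hF : F ∈ Vspace') :
    (Polynomial.X : Polynomial ℂ) ^ 3 ∣ aeval ![1, 0, Polynomial.X] F := by
  obtain ⟨a, A1, A2, A3, hom1, supp1, hom2, supp2, hom3, supp3, rfl⟩ := hF
  have hdvd {B : MvPolynomial (Fin 3) ℂ} (hB : B ∈ formsIn ℂ {1, 2} 3) :
      (Polynomial.X : Polynomial ℂ) ^ 3 ∣ aeval ![1, 0, Polynomial.X] B :=
    pow_dvd_aeval_of_mem_formsIn hB (by simp)
  simp only [map_add, map_mul]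
  refine dvd_add (dvd_add (dvd_add ?_ ?_) ?_) ?_
  · simp
  · exact (hdvd ⟨hom1, supp1⟩).mul_left _
  · exact (hdvd ⟨hom2, supp2⟩).mul_left _
  · exact (hdvd ⟨hom3, supp3⟩).mul_left _

end QuinticSpace

section Stabilizer

variable {T : Matrix (Fin 3) (Fin 3) ℂ} {F : MvPolynomial (Fin 3) ℂ}

theorem aeval_column_eq_zero (hT : ∀ F ∈ Vspace', subst T F ∈ Vspace') (hF : F ∈ Vspace')
    {j : Fin 3} (hj : j ≠ 2) : aeval (fun i ↦ T i j) F = 0 := by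
  have h := aeval_single_eq_zero_of_mem_Vspace' (hT F hF) hj
  simpa [aeval_subst, Pi.single_apply] using h

theorem X_cube_dvd_aeval_image_cuspTangent (hT : ∀ F ∈ Vspace', subst T F ∈ Vspace')
    (hF : F ∈ Vspace') :
    (Polynomial.X : Polynomial ℂ) ^ 3 ∣
      aeval (fun i ↦ Polynomial.C (T i 0) + Polynomial.C (T i 2) * Polynomial.X) F := by
  have h := X_cube_dvd_aeval_of_mem_Vspace' (hT F hF)
  simpa [aeval_subst, Fin.sum_univ_three, Polynomial.smul_eq_C_mul] using h

theorem entry_two_eq_zero (hT : ∀ F ∈ Vspace', subst T F ∈ Vspace') {j : Fin 3} (hj : j ≠ 2) :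
    T 2 j = 0 := by
  have h := aeval_column_eq_zero hT
    (X_two_sq_mul_mem_Vspace' (X_pow_mem_formsIn (i := 2) (by simp) 3)) hj
  simpa using h

theorem entry_one_zero_eq_zero (hT : ∀ F ∈ Vspace', subst T F ∈ Vspace') (h22 : T 2 2 ≠ 0) :
    T 1 0 = 0 := by
  have h20 : T 2 0 = 0 := entry_two_eq_zero hT (by decide)
  have h := X_cube_dvd_aeval_image_cuspTangent hT
    (X_two_sq_mul_mem_Vspace' (X_pow_mem_formsIn (i := 1) (by simp) 3))
  simp only [map_mul, map_pow, aeval_X, h20, Polynomial.C_0, zero_add] at h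
  exact (eq_zero_or_eq_zero_of_X_pow_succ_dvd h).resolve_left h22

theorem entry_one_two_eq_zero (hT : ∀ F ∈ Vspace', subst T F ∈ Vspace') (h10 : T 1 0 = 0)
    (h00 : T 0 0 ≠ 0) : T 1 2 = 0 := by
  have h := X_cube_dvd_aeval_image_cuspTangent hT X_one_sq_mul_X_zero_cube_mem_Vspace'
  simp only [map_mul, map_pow, aeval_X, h10, Polynomial.C_0, zero_add] at h
  exact (eq_zero_or_eq_zero_of_X_pow_succ_dvd h).resolve_right h00

theorem entry_zero_one_eq_zero (hT : ∀ F ∈ Vspace', subst T F ∈ Vspace') (h11 : T 1 1 ≠ 0) :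
    T 0 1 = 0 := by
  have h := aeval_column_eq_zero hT X_one_sq_mul_X_zero_cube_mem_Vspace' (j := 1) (by decide)
  simpa [h11] using h

theorem diag_ne_zero_and_eq_of_forall_subst_mem_Vspace' (hT : ∀ F ∈ Vspace', subst T F ∈ Vspace')
    (hdet : T.det ≠ 0) :
    T 0 0 ≠ 0 ∧ T 1 1 ≠ 0 ∧ T 2 2 ≠ 0 ∧ T = !![T 0 0, 0, T 0 2; 0, T 1 1, 0; 0, 0, T 2 2] := by
  have h20 : T 2 0 = 0 := entry_two_eq_zero hT (by decide)
  have h21 : T 2 1 = 0 := entry_two_eq_zero hT (by decide)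
  rw [Matrix.det_fin_three, h20, h21] at hdet
  have h22 : T 2 2 ≠ 0 := fun h ↦ hdet (by simp [h])
  have h10 : T 1 0 = 0 := entry_one_zero_eq_zero hT h22
  have h00 : T 0 0 ≠ 0 := fun h ↦ hdet (by simp [h, h10])
  have h11 : T 1 1 ≠ 0 := fun h ↦ hdet (by simp [h, h10])
  have h01 : T 0 1 = 0 := entry_zero_one_eq_zero hT h11
  have h12 : T 1 2 = 0 := entry_one_two_eq_zero hT h10 h00
  refine ⟨h00, h11, h22, ?_⟩
  ext i j
  fin_cases i <;> fin_cases j <;> simp [h01, h10, h12, h20, h21]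

theorem subst_eq_aeval (a b c d : ℂ) (F : MvPolynomial (Fin 3) ℂ) :
    subst !![a, 0, b; 0, c, 0; 0, 0, d] F =
      aeval ![a • X 0 + b • X 2, c • X 1, d • X 2] F := by
  rw [subst]
  congr 2
  funext i
  fin_cases i <;> simp [Fin.sum_univ_three, smul_eq_C_mul]

theorem subst_mem_Vspace' (a b c d : ℂ) (hF : F ∈ Vspace') :
    subst !![a, 0, b; 0, c, 0; 0, 0, d] F ∈ Vspace' := by
  obtain ⟨e, A1, A2, A3, hom1, supp1, hom2, supp2, hom3, supp3, rfl⟩ := hF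
  rw [subst_eq_aeval]
  set f : Fin 3 → MvPolynomial (Fin 3) ℂ := ![a • X 0 + b • X 2, c • X 1, d • X 2]
  have hlin : ∀ i ∈ ({1, 2} : Set (Fin 3)), f i ∈ formsIn ℂ {1, 2} 1 := by
    rintro i (rfl | rfl)
    · exact Submodule.smul_mem _ c (X_mem_formsIn (by simp))
    · exact Submodule.smul_mem _ d (X_mem_formsIn (by simp))
  have h1 : aeval f A1 ∈ formsIn ℂ {1, 2} 3 := aeval_mem_formsIn ⟨hom1, supp1⟩ hlin
  have h2 : aeval f A2 ∈ formsIn ℂ {1, 2} 3 := aeval_mem_formsIn ⟨hom2, supp2⟩ hlin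
  have h3 : aeval f A3 ∈ formsIn ℂ {1, 2} 3 := aeval_mem_formsIn ⟨hom3, supp3⟩ hlin
  convert shear_mem_Vspace' a b (e * c ^ 2) h1 (Submodule.smul_mem _ d h2)
    (Submodule.smul_mem _ (d ^ 2) h3) using 1
  have hf0 : f 0 = a • X 0 + b • X 2 := rfl
  have hf1 : f 1 = c • X 1 := rfl
  have hf2 : f 2 = d • X 2 := rfl
  simp only [map_add, map_mul, map_pow, aeval_X, aeval_C, algebraMap_eq, hf0, hf1, hf2,
    smul_eq_C_mul]
  ring

end Stabilizer

/-- An invertible linear change of coordinates `T ∈ GL₃(ℂ)` preserves the space `V'` of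
equations of quintics with a cusp at `(1:0:0)`, cuspidal tangent `{x1 = 0}`, and an
ordinary node at `(0:1:0)`, if and only if it has the form
`x0 ↦ a·x0 + b·x2, x1 ↦ c·x1, x2 ↦ d·x2` with `a, c, d` nonzero. -/
theorem stabilizer_of_quintic_space' (T : Matrix (Fin 3) (Fin 3) ℂ) (hT : IsUnit T.det) :
    (∀ F ∈ Vspace', subst T F ∈ Vspace') ↔
      ∃ a b c d : ℂ, a ≠ 0 ∧ c ≠ 0 ∧ d ≠ 0 ∧
        T = !![a, 0, b; 0, c, 0; 0, 0, d] := by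
  constructor
  · intro h
    exact ⟨T 0 0, T 0 2, T 1 1, T 2 2, diag_ne_zero_and_eq_of_forall_subst_mem_Vspace' h hT.ne_zero⟩
  · rintro ⟨a, b, c, d, -, -, -, rfl⟩ F hF
    exact subst_mem_Vspace' a b c d hF
end
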